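/- Let L be a finite-dimensional Lie algebra over ℂ carrying a nondegenerate symmetric invariant bilinear form B (invariance: B(⁅a,b⁆,c) = B(a,⁅b,c⁆) for all a,b,c ∈ L). Let x ∈ L be such that ad x is diagonalizable with all eigenvalues in ½ℤ; for j ∈ ½ℤ let g_j denote the eigenspace of ad x with eigenvalue j, so that L = ⊕_{j ∈ ½ℤ} g_j. Let f ∈ g_{−1} and suppose (x,f) is a good pair, i.e. the centralizer L^f = {a ∈ L : ⁅f,a⁆ = 0} is contained in ⊕_{j ≤ 0} g_j. Set M = ⊕_{j ≤ 1/2} g_j and g₋ = ⊕_{j < 0} g_j. Then the restriction of ad f to M has image exactly g₋ and kernel exactly L^f; that is, the sequence 0 → L^f → M →^{ad f} g₋ → 0 is exact. -/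

import Mathlib

/-!
The map `ad f` lowers degrees by `d` and is skew-adjoint for `B`, which pairs `g k` with `g (-k)`
perfectly as soon as one of them is finite-dimensional. Hence `ad f : g (k + d) → g k` is, up to
sign, the transpose of `ad f : g (-k) → g (-k - d)`, and it is onto if the latter is injective. For
`k < 0` injectivity holds because the centralizer of `f` meets no positive degree.
-/

section SkewAdjoint

variable {R V : Type*} [CommRing R] [AddCommGroup V] [Module R V] {B : LinearMap.BilinForm R V}

theorem apply_eq_zero_of_mem_eigenspace_of_isSkewAdjoint [NoZeroDivisors R]
    {T : Module.End R V} (hT : B.IsSkewAdjoint T) {μ ν : R} (hμν : μ + ν ≠ 0) {a b : V}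
    (ha : a ∈ T.eigenspace μ) (hb : b ∈ T.eigenspace ν) : B a b = 0 := by
  rw [Module.End.mem_eigenspace_iff] at ha hb
  have hab : μ * B a b = -(ν * B a b) := by simpa [ha, hb] using hT a b
  have hsum : (μ + ν) * B a b = 0 := by linear_combination hab
  exact (mul_eq_zero.mp hsum).resolve_left hμν

variable {Γ : Type*} [AddGroup Γ] {g : Γ → Submodule R V}

theorem eq_zero_of_forall_mem_neg_apply_eq_zero (hB : B.SeparatingRight)
    (horth : ∀ j k, j + k ≠ 0 → ∀ a ∈ g j, ∀ b ∈ g k, B a b = 0) (htop : ⨆ k, g k = ⊤)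
    {k : Γ} {b : V} (hb : b ∈ g k) (h : ∀ a ∈ g (-k), B a b = 0) : b = 0 := by
  have hker : ⨆ j, g j ≤ LinearMap.ker (B.flip b) := by
    refine iSup_le fun j a ha => ?_
    obtain rfl | hj := eq_or_ne j (-k)
    · exact h a ha
    · exact horth j k (mt eq_neg_of_add_eq_zero_left hj) a ha b hb
  rw [htop] at hker
  exact hB b fun a => hker Submodule.mem_top

end SkewAdjoint

section Graded

variable {K V Γ : Type*} [Field K] [AddCommGroup V] [Module K V] {B : LinearMap.BilinForm K V}
  {g : Γ → Submodule K V} {T : Module.End K V}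

theorem exists_mem_neg_forall_apply_eq [AddGroup Γ] (hB : B.SeparatingRight)
    (horth : ∀ j k, j + k ≠ 0 → ∀ a ∈ g j, ∀ b ∈ g k, B a b = 0) (htop : ⨆ k, g k = ⊤)
    (k : Γ) [FiniteDimensional K (g k)] (φ : Module.Dual K V) :
    ∃ a ∈ g (-k), ∀ b ∈ g k, B a b = φ b := by
  let pairing : g (-k) →ₗ[K] Module.Dual K (g k) := B.domRestrict₁₂ (g (-k)) (g k)
  have hinj : Function.Injective pairing.flip := by
    refine (injective_iff_map_eq_zero _).mpr fun b hb => Subtype.ext ?_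
    exact eq_zero_of_forall_mem_neg_apply_eq_zero hB horth htop b.2
      fun a ha => LinearMap.congr_fun hb ⟨a, ha⟩
  obtain ⟨a, ha⟩ := LinearMap.flip_injective_iff₂.mp hinj (φ.domRestrict (g k))
  exact ⟨a, a.2, fun b hb => LinearMap.congr_fun ha ⟨b, hb⟩⟩

theorem le_map_of_isSkewAdjoint_of_disjoint_ker [AddGroup Γ] (hB : B.Nondegenerate)
    (horth : ∀ j k, j + k ≠ 0 → ∀ a ∈ g j, ∀ b ∈ g k, B a b = 0) (htop : ⨆ k, g k = ⊤)
    (hT : B.IsSkewAdjoint T) {d : Γ} (hdeg : ∀ k, ∀ a ∈ g k, T a ∈ g (k - d))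
    {k : Γ} [FiniteDimensional K (g k)] (hker : Disjoint (LinearMap.ker T) (g (-k))) :
    g k ≤ (g (k + d)).map T := by
  intro y hy
  by_contra hyT
  obtain ⟨φ, hφy, hφT⟩ := Submodule.exists_le_ker_of_notMem hyT
  obtain ⟨a, ha, haφ⟩ := exists_mem_neg_forall_apply_eq hB.2 horth htop k φ
  have hle : ∀ j, g j ≤ LinearMap.ker (B (T a)) := by
    intro j c hc
    rw [LinearMap.mem_ker, hT a c, Pi.neg_apply, map_neg, neg_eq_zero]
    obtain rfl | hj := eq_or_ne j (k + d)
    · rw [haφ (T c) (by simpa using hdeg _ c hc)]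
      exact hφT (Submodule.mem_map_of_mem hc)
    · refine horth (-k) (j - d) (fun h => hj ?_) a ha (T c) (hdeg j c hc)
      rw [← sub_eq_iff_eq_add]
      exact (neg_add_eq_zero.mp h).symm
  have hTa : T a = 0 := hB.1 _ fun c => iSup_le hle (htop ▸ Submodule.mem_top : c ∈ ⨆ j, g j)
  have ha0 : a = 0 := Submodule.disjoint_def.mp hker a hTa ha
  exact hφy (by rw [← haφ y hy, ha0, map_zero, LinearMap.zero_apply])

variable [AddCommGroup Γ] [LinearOrder Γ] [IsOrderedAddMonoid Γ]

theorem map_iSup_lt_eq_of_isSkewAdjoint_of_ker_le (hB : B.Nondegenerate)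
    (horth : ∀ j k, j + k ≠ 0 → ∀ a ∈ g j, ∀ b ∈ g k, B a b = 0) (htop : ⨆ k, g k = ⊤)
    (hind : iSupIndep g) (hfin : ∀ k < 0, FiniteDimensional K (g k)) (hT : B.IsSkewAdjoint T)
    {d : Γ} (hdeg : ∀ k, ∀ a ∈ g k, T a ∈ g (k - d)) (hker : LinearMap.ker T ≤ ⨆ k ≤ 0, g k) :
    (⨆ k < d, g k).map T = ⨆ k < 0, g k := by
  apply le_antisymm
  · rw [Submodule.map_le_iff_le_comap]
    exact iSup₂_le fun k hk a ha =>
      Submodule.mem_iSup_of_mem (k - d) (Submodule.mem_iSup_of_mem (sub_neg.mpr hk) (hdeg k a ha))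
  · refine iSup₂_le fun k hk => ?_
    have := hfin k hk
    have hdisj : Disjoint (LinearMap.ker T) (g (-k)) :=
      (hind.disjoint_biSup (y := {j | j ≤ 0}) (by simpa using hk)).symm.mono_left hker
    exact (le_map_of_isSkewAdjoint_of_disjoint_ker hB horth htop hT hdeg hdisj).trans
      (Submodule.map_mono (le_iSup₂_of_le (k + d) (add_lt_of_neg_left d hk) le_rfl))

end Graded

section Lie

variable {R L : Type*} [CommRing R] [LieRing L] [LieAlgebra R L]

theorem lie_mem_eigenspace_ad {x a b : L} {μ ν : R}
    (ha : a ∈ (LieAlgebra.ad R L x).eigenspace μ) (hb : b ∈ (LieAlgebra.ad R L x).eigenspace ν) :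
    ⁅a, b⁆ ∈ (LieAlgebra.ad R L x).eigenspace (μ + ν) := by
  rw [Module.End.mem_eigenspace_iff, LieAlgebra.ad_apply] at ha hb ⊢
  rw [leibniz_lie, ha, hb, smul_lie, lie_smul, ← add_smul]

theorem isSkewAdjoint_ad {B : LinearMap.BilinForm R L} (hinv : ∀ a b c, B ⁅a, b⁆ c = B a ⁅b, c⁆)
    (a : L) : B.IsSkewAdjoint (LieAlgebra.ad R L a) := by
  intro b c
  rw [LieAlgebra.ad_apply, ← lie_skew, map_neg, LinearMap.neg_apply, hinv, Pi.neg_apply,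
    LieAlgebra.ad_apply, map_neg]

end Lie

/-- Half-integral gradings are the case `Γ = ℤ`, `χ k = k / 2`, `d = 2`, where `k < d` means
`k / 2 ≤ 1 / 2`. -/
theorem good_pair_exact_sequence_general
    {K L Γ : Type*} [Field K] [LieRing L] [LieAlgebra K L]
    [AddCommGroup Γ] [LinearOrder Γ] [IsOrderedAddMonoid Γ]
    {B : LinearMap.BilinForm K L} (hinv : ∀ a b c, B ⁅a, b⁆ c = B a ⁅b, c⁆) (hB : B.Nondegenerate)
    {x : L} {χ : Γ →+ K} (hχ : Function.Injective χ) {g : Γ → Submodule K L}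
    (hg : ∀ k, g k = (LieAlgebra.ad K L x).eigenspace (χ k)) (hdiag : ⨆ k, g k = ⊤)
    (hfin : ∀ k < 0, FiniteDimensional K (g k)) {d : Γ} (hd : 0 < d) {f : L} (hf : f ∈ g (-d))
    (hgood : LinearMap.ker (LieAlgebra.ad K L f) ≤ ⨆ k ≤ 0, g k) :
    (⨆ k < d, g k).map (LieAlgebra.ad K L f) = ⨆ k < 0, g k ∧
      LinearMap.ker (LieAlgebra.ad K L f) ≤ ⨆ k < d, g k := by
  obtain rfl := funext hg
  have hind := (LieAlgebra.ad K L x).eigenspaces_iSupIndep.comp hχ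
  have horth (j k : Γ) (hjk : j + k ≠ 0) : ∀ a ∈ (LieAlgebra.ad K L x).eigenspace (χ j),
      ∀ b ∈ (LieAlgebra.ad K L x).eigenspace (χ k), B a b = 0 := fun a ha b hb =>
    apply_eq_zero_of_mem_eigenspace_of_isSkewAdjoint (isSkewAdjoint_ad hinv x)
      (by rwa [← map_add, map_ne_zero_iff χ hχ]) ha hb
  have hdeg (k : Γ) (a : L) (ha : a ∈ (LieAlgebra.ad K L x).eigenspace (χ k)) :
      ⁅f, a⁆ ∈ (LieAlgebra.ad K L x).eigenspace (χ (k - d)) := by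
    rw [sub_eq_neg_add, map_add]
    exact lie_mem_eigenspace_ad hf ha
  exact ⟨map_iSup_lt_eq_of_isSkewAdjoint_of_ker_le hB horth hdiag hind hfin
      (isSkewAdjoint_ad hinv f) hdeg hgood,
    hgood.trans (biSup_mono fun _ hk => hk.trans_lt hd)⟩

/-- The exact sequence `0 → L^f → ⊕_{j ≤ 1/2} g_j → g₋ → 0` (Section 1, before (1.12)):
for a good pair `(x,f)`, the restriction of `ad f` to `M = ⊕_{j ≤ 1/2} g_j` has image
exactly `g₋ = ⊕_{j < 0} g_j` and kernel exactly the centralizer `L^f`. -/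
theorem good_pair_exact_sequence
    {L : Type*} [LieRing L] [LieAlgebra ℂ L] [FiniteDimensional ℂ L]
    (B : L →ₗ[ℂ] L →ₗ[ℂ] ℂ)
    (hsymm : ∀ a b, B a b = B b a)
    (hinv : ∀ a b c, B ⁅a, b⁆ c = B a ⁅b, c⁆)
    (hnd : ∀ a, (∀ b, B a b = 0) → a = 0)
    (x : L) (g : ℤ → Submodule ℂ L)
    (hg : ∀ k : ℤ, g k = Module.End.eigenspace (LieAlgebra.ad ℂ L x) ((k : ℂ) / 2))
    (hdiag : (⨆ k : ℤ, g k) = ⊤)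
    (f : L) (hf : f ∈ g (-2))
    (hgood : ∀ a : L, ⁅f, a⁆ = 0 → a ∈ ⨆ k ≤ (0 : ℤ), g k)
    (M gm : Submodule ℂ L)
    (hM : M = ⨆ k ≤ (1 : ℤ), g k) (hgm : gm = ⨆ k < (0 : ℤ), g k) :
    Submodule.map (LieAlgebra.ad ℂ L f) M = gm ∧
      LinearMap.ker (LieAlgebra.ad ℂ L f) ≤ M := by
  have hB : LinearMap.BilinForm.Nondegenerate B :=
    ⟨hnd, fun b hb => hnd b fun a => hsymm b a ▸ hb a⟩
  subst hM hgm
  simpa only [← Int.lt_add_one_iff, one_add_one_eq_two] using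
    good_pair_exact_sequence_general hinv hB
      (χ := .mk' (fun k : ℤ => (k : ℂ) / 2) (by simp [add_div])) (fun j k h => by simpa using h)
      hg hdiag (fun _ _ => inferInstance) two_pos hf hgood
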